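/- arXiv:2409.13428 — 2 statements merged into one kernel-verified Lean document; each statement's English description precedes it below -/
import Mathlib

section
/- Let E = ℝ^d with the Euclidean inner product and norm, let G : E → E be L-Lipschitz (‖G(z') - G(z'')‖ ≤ L‖z' - z''‖ for all z', z'') and μ-strongly monotone (⟨G(z') - G(z''), z' - z''⟩ ≥ μ‖z' - z''‖² for all z', z''), let γ > 0, and let z, z* ∈ E. Define the extragradient half-step w = z - γ G(z) and full step z⁺ = z - γ G(w). Then ‖z⁺ - z*‖² ≤ ‖z - z*‖² - 2γμ‖w - z*‖² - 2γ⟨G(z*), w - z*⟩ + γ²L²‖z - w‖² - ‖z - w‖². -/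
open InnerProductSpace

/-! The four-point identity for `z, z⁺, w, z*` gives
`‖z⁺ - z*‖² = ‖z - z*‖² - 2 ⟪z - z⁺, w - z*⟫ + ‖z⁺ - w‖² - ‖z - w‖²`.
Here `z - z⁺ = γ G(w)`, so the inner product is controlled by strong monotonicity between `w` and
`z*`, while `w - z⁺ = γ (G(w) - G(z))` is controlled by the Lipschitz condition between `w` and
`z`. -/

section

variable {E : Type*} [SeminormedAddCommGroup E] [InnerProductSpace ℝ E]

theorem two_mul_real_inner_sub_sub (a b c d : E) :
    2 * ⟪a - b, c - d⟫_ℝ = ‖a - d‖ ^ 2 + ‖b - c‖ ^ 2 - ‖a - c‖ ^ 2 - ‖b - d‖ ^ 2 := by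
  have ha := norm_add_sq_real (a - c) (c - d)
  have hb := norm_add_sq_real (b - c) (c - d)
  have hinner : ⟪a - b, c - d⟫_ℝ = ⟪a - c, c - d⟫_ℝ - ⟪b - c, c - d⟫_ℝ := by
    rw [← inner_sub_left, sub_sub_sub_cancel_right]
  rw [sub_add_sub_cancel] at ha hb
  linarith

theorem norm_extrapolated_step_sub_sq {γ : ℝ} {p q z w zplus : E} (x : E)
    (hw : w = z - γ • p) (hzplus : zplus = z - γ • q) :
    ‖zplus - x‖ ^ 2 =
      ‖z - x‖ ^ 2 - 2 * γ * ⟪q, w - x⟫_ℝ + γ ^ 2 * ‖q - p‖ ^ 2 - ‖z - w‖ ^ 2 := by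
  have hstep : z - zplus = γ • q := by rw [hzplus, sub_sub_cancel]
  have hcorrection : ‖zplus - w‖ ^ 2 = γ ^ 2 * ‖q - p‖ ^ 2 := by
    rw [norm_sub_rev, hw, hzplus, sub_sub_sub_cancel_left, ← smul_sub, norm_smul, mul_pow,
      Real.norm_eq_abs, sq_abs]
  have hfour := two_mul_real_inner_sub_sub z zplus w x
  rw [hstep, real_inner_smul_left, hcorrection] at hfour
  linarith

theorem extragradient_descent_lemma_general {L μ γ : ℝ} (hγ : 0 ≤ γ) {G : E → E}
    {z zstar w zplus : E}
    (hLip : ‖G w - G z‖ ≤ L * ‖w - z‖)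
    (hMon : μ * ‖w - zstar‖ ^ 2 ≤ ⟪G w - G zstar, w - zstar⟫_ℝ)
    (hw : w = z - γ • G z) (hzplus : zplus = z - γ • G w) :
    ‖zplus - zstar‖ ^ 2 ≤
      ‖z - zstar‖ ^ 2 - 2 * γ * μ * ‖w - zstar‖ ^ 2
        - 2 * γ * ⟪G zstar, w - zstar⟫_ℝ
        + γ ^ 2 * L ^ 2 * ‖z - w‖ ^ 2 - ‖z - w‖ ^ 2 := by
  have hinner : μ * ‖w - zstar‖ ^ 2 + ⟪G zstar, w - zstar⟫_ℝ ≤ ⟪G w, w - zstar⟫_ℝ := by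
    rwa [inner_sub_left, le_sub_iff_add_le] at hMon
  have hsq : ‖G w - G z‖ ^ 2 ≤ L ^ 2 * ‖z - w‖ ^ 2 := by
    rw [← mul_pow, norm_sub_rev z w]
    gcongr
  calc ‖zplus - zstar‖ ^ 2
      = ‖z - zstar‖ ^ 2 - 2 * γ * ⟪G w, w - zstar⟫_ℝ + γ ^ 2 * ‖G w - G z‖ ^ 2
          - ‖z - w‖ ^ 2 := norm_extrapolated_step_sub_sq zstar hw hzplus
    _ ≤ ‖z - zstar‖ ^ 2 - 2 * γ * (μ * ‖w - zstar‖ ^ 2 + ⟪G zstar, w - zstar⟫_ℝ)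
          + γ ^ 2 * (L ^ 2 * ‖z - w‖ ^ 2) - ‖z - w‖ ^ 2 := by gcongr
    _ = _ := by ring

end

/-- Lemma 1 (descent lemma) for one extragradient step, fixed realization. -/
theorem extragradient_descent_lemma
    (d : ℕ) (L μ γ : ℝ) (hγ : 0 < γ)
    (G : EuclideanSpace ℝ (Fin d) → EuclideanSpace ℝ (Fin d))
    (hLip : ∀ z' z'' : EuclideanSpace ℝ (Fin d), ‖G z' - G z''‖ ≤ L * ‖z' - z''‖)
    (hMon : ∀ z' z'' : EuclideanSpace ℝ (Fin d),
      μ * ‖z' - z''‖ ^ 2 ≤ ⟪G z' - G z'', z' - z''⟫_ℝ)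
    (z zstar w zplus : EuclideanSpace ℝ (Fin d))
    (hw : w = z - γ • G z) (hzplus : zplus = z - γ • G w) :
    ‖zplus - zstar‖ ^ 2 ≤
      ‖z - zstar‖ ^ 2 - 2 * γ * μ * ‖w - zstar‖ ^ 2
        - 2 * γ * ⟪G zstar, w - zstar⟫_ℝ
        + γ ^ 2 * L ^ 2 * ‖z - w‖ ^ 2 - ‖z - w‖ ^ 2 :=
  extragradient_descent_lemma_general hγ.le (hLip w z) (hMon w zstar) hw hzplus
end

section
/- Let E = ℝ^d with the Euclidean norm, let γ > 0, L > 0, and for each t ∈ ℕ let G_t : E → E be an L-Lipschitz operator. Let the sequences (z_t) and (w_t) in E satisfy w_t = z_t - γ G_t(z_t) and z_{t+1} = z_t - γ G_t(w_t) for all t. Then for every 𝒯 ∈ ℕ and every t ≥ 𝒯, ‖w_t - w_{t-𝒯}‖ ≤ Σ_{k=0}^{𝒯} (1 + γL) ‖w_{t-k} - z_{t-k}‖. -/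
/-!
The full step and the half-step leave the same point `z t`, so `z (t + 1) - w t` is `γ` times a
difference of two values of `G t`, and the Lipschitz bound makes it at most `γ * L` times the length
of the half-step. Walking back along `w t, z t, w (t - 1), z (t - 1), …, w (t - T)`, each half-step
from `z (t - k)` to `w (t - k)` is charged at most twice: once with weight `1` for its own length,
and once with weight `γ * L` for the jump from `w (t - k)` to `z (t - k + 1)`.
-/

open Finset
open scoped NNReal

theorem sum_range_add_mul_succ_le {R : Type*} [Semiring R] [PartialOrder R] [IsOrderedRing R]
    {c : R} (hc : 0 ≤ c) {a : ℕ → R} (ha : ∀ k, 0 ≤ a k) (n : ℕ) :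
    ∑ k ∈ range n, (a k + c * a (k + 1)) ≤ ∑ k ∈ range (n + 1), (1 + c) * a k := by
  calc ∑ k ∈ range n, (a k + c * a (k + 1))
      = ∑ k ∈ range n, a k + ∑ k ∈ range n, c * a (k + 1) := sum_add_distrib
    _ ≤ ∑ k ∈ range (n + 1), a k + ∑ k ∈ range (n + 1), c * a k := by
        rw [sum_range_succ a, sum_range_succ' (fun k ↦ c * a k)]
        exact add_le_add (le_add_of_nonneg_right (ha n))
          (le_add_of_nonneg_right (mul_nonneg hc (ha 0)))
    _ = ∑ k ∈ range (n + 1), (1 + c) * a k := by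
        simp only [add_mul, one_mul, sum_add_distrib]

theorem dist_step_back_le_sum_of_dist_succ_le {X : Type*} [PseudoMetricSpace X] {c : ℝ}
    (hc : 0 ≤ c) {z w : ℕ → X} (hzw : ∀ s, dist (z (s + 1)) (w s) ≤ c * dist (w s) (z s))
    {T t : ℕ} (ht : T ≤ t) :
    dist (w t) (w (t - T)) ≤
      ∑ k ∈ range (T + 1), (1 + c) * dist (w (t - k)) (z (t - k)) := by
  have dist_succ_le (s : ℕ) :
      dist (w (s + 1)) (w s) ≤ dist (w (s + 1)) (z (s + 1)) + c * dist (w s) (z s) :=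
    (dist_triangle _ (z (s + 1)) _).trans (add_le_add_right (hzw s) _)
  calc dist (w t) (w (t - T))
      ≤ ∑ k ∈ range T, (dist (w (t - k)) (z (t - k))
          + c * dist (w (t - (k + 1))) (z (t - (k + 1)))) := by
        refine dist_le_range_sum_of_dist_le (f := fun k ↦ w (t - k)) T fun {k} hk ↦ ?_
        have index_eq : t - k = t - (k + 1) + 1 := by omega
        simpa only [index_eq] using dist_succ_le (t - (k + 1))
    _ ≤ ∑ k ∈ range (T + 1), (1 + c) * dist (w (t - k)) (z (t - k)) :=
        sum_range_add_mul_succ_le hc (a := fun k ↦ dist (w (t - k)) (z (t - k)))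
          (fun _ ↦ dist_nonneg) T

section NormedSpace

variable {𝕜 E : Type*} [NormedField 𝕜] [SeminormedAddCommGroup E] [NormedSpace 𝕜 E]

theorem dist_sub_smul_le_of_lipschitzWith {K : ℝ≥0} {G : E → E} (hG : LipschitzWith K G)
    (γ : 𝕜) (u x y : E) :
    dist (u - γ • G x) (u - γ • G y) ≤ ‖γ‖ * K * dist x y := by
  calc dist (u - γ • G x) (u - γ • G y)
      = ‖γ‖ * dist (G x) (G y) := by rw [dist_sub_left, dist_smul₀]
    _ ≤ ‖γ‖ * (K * dist x y) := by gcongr; exact hG.dist_le_mul x y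
    _ = ‖γ‖ * K * dist x y := (mul_assoc _ _ _).symm

theorem extragradient_step_back_general {γ : 𝕜} {K : ℝ≥0} {G : ℕ → E → E}
    (hG : ∀ t, LipschitzWith K (G t)) {z w : ℕ → E}
    (hw : ∀ t, w t = z t - γ • G t (z t)) (hz : ∀ t, z (t + 1) = z t - γ • G t (w t))
    {T t : ℕ} (ht : T ≤ t) :
    ‖w t - w (t - T)‖ ≤
      ∑ k ∈ range (T + 1), (1 + ‖γ‖ * K) * ‖w (t - k) - z (t - k)‖ := by
  have fullStep_near_halfStep (s : ℕ) :
      dist (z (s + 1)) (w s) ≤ ‖γ‖ * K * dist (w s) (z s) := by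
    calc dist (z (s + 1)) (w s)
        = dist (z s - γ • G s (w s)) (z s - γ • G s (z s)) := by rw [← hz, ← hw]
      _ ≤ ‖γ‖ * K * dist (w s) (z s) := dist_sub_smul_le_of_lipschitzWith (hG s) γ (z s) (w s) (z s)
  simpa only [dist_eq_norm] using
    dist_step_back_le_sum_of_dist_succ_le (by positivity) fullStep_near_halfStep ht

end NormedSpace

/-- Lemma 2 (step-back lemma) for the Extrapolated Gradient Method. -/
theorem extragradient_step_back
    (d : ℕ) (γ L : ℝ) (hγ : 0 < γ) (hL : 0 < L)
    (G : ℕ → EuclideanSpace ℝ (Fin d) → EuclideanSpace ℝ (Fin d))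
    (hLip : ∀ (t : ℕ) (z' z'' : EuclideanSpace ℝ (Fin d)),
      ‖G t z' - G t z''‖ ≤ L * ‖z' - z''‖)
    (z w : ℕ → EuclideanSpace ℝ (Fin d))
    (hw : ∀ t, w t = z t - γ • G t (z t))
    (hz : ∀ t, z (t + 1) = z t - γ • G t (w t))
    (T t : ℕ) (ht : T ≤ t) :
    ‖w t - w (t - T)‖ ≤
      ∑ k ∈ Finset.range (T + 1), (1 + γ * L) * ‖w (t - k) - z (t - k)‖ := by
  lift L to ℝ≥0 using hL.le
  simpa only [Real.norm_of_nonneg hγ.le] using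
    extragradient_step_back_general (fun s ↦ lipschitzWith_iff_norm_sub_le.2 (hLip s)) hw hz ht
end
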